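/- For every function f ∈ 𝔉 with f ≺ ∛n (the cube root function n ↦ n^{1/3}), the Heisenberg group ℋ₃(ℤ) does not belong to the class ℬ_f. -/

import Mathlib

namespace CAG

/-- The convolution `w₁ ⊗ w₂` of two words, over the padded alphabet
`(Σ ∪ {⋄})²`, modelled as `Option α × Option α` where `none` is the padding symbol `⋄`. -/
def conv {α : Type*} : List α → List α → List (Option α × Option α)
  | [], [] => []
  | a :: as, [] => (some a, none) :: conv as []
  | [], b :: bs => (none, some b) :: conv [] bs
  | a :: as, b :: bs => (some a, some b) :: conv as bs

/-- A binary relation on words is regular if the language of convolutions of its pairs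
is a regular language. -/
def IsRegularRel {α : Type*} (R : Set (List α × List α)) : Prop :=
  Language.IsRegular {w | ∃ p ∈ R, w = conv p.1 p.2}

variable {G : Type*} [Group G]

/-- The alphabet `S = A ∪ A⁻¹` associated to a generating set `A ⊆ G`. -/
def Alph (A : Set G) : Type _ := {x : G // x ∈ A ∪ A⁻¹}

/-- The canonical evaluation map `π : S* → G`. -/
def eval (A : Set G) (w : List (Alph A)) : G := (w.map Subtype.val).prod

/-- The word length `d_A(g)` of `g` with respect to the generating set `A`. -/
noncomputable def wordLength (A : Set G) (g : G) : ℕ :=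
  sInf {n | ∃ w : List (Alph A), eval A w = g ∧ w.length = n}

/-- The distance `d_A(g₁, g₂)` in the Cayley graph of `G` with respect to `A`. -/
noncomputable def cayleyDist (A : Set G) (g₁ g₂ : G) : ℕ := wordLength A (g₁⁻¹ * g₂)

/-- `ψ : L → G` is a Cayley automatic representation of `G` (w.r.t. the
generating set `A`): `L ⊆ S*` is regular, `ψ` is a bijection from `L` onto `G`, and for every
`a ∈ A` the relation `R_a = {(ψ⁻¹(g), ψ⁻¹(g·a)) : g ∈ G}` is regular. -/
def IsCayleyAutomaticRep (A : Set G) (L : Language (Alph A)) (ψ : List (Alph A) → G) : Prop :=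
  Language.IsRegular L ∧ Set.BijOn ψ L Set.univ ∧
    ∀ a ∈ A, IsRegularRel {p : List (Alph A) × List (Alph A) |
      p.1 ∈ L ∧ p.2 ∈ L ∧ ψ p.2 = ψ p.1 * a}

/-- `G` is Cayley automatic with respect to the generating set `A`. -/
def IsCayleyAutomatic (A : Set G) : Prop :=
  ∃ (L : Language (Alph A)) (ψ : List (Alph A) → G), IsCayleyAutomaticRep A L ψ

/-- `G` is automatic (in the sense of Thurston) with respect to the generating set `A`:
there is a regular language `L ⊆ S*` on which the canonical evaluation map `π` is a bijection
onto `G` and all the relations `R_a`, `a ∈ A`, are regular. -/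
def IsAutomatic (A : Set G) : Prop :=
  ∃ L : Language (Alph A), IsCayleyAutomaticRep A L (eval A)

/-- The family `𝔉` of non-decreasing, non-negative real valued functions defined on a
final segment `[Q, ∞)` of `ℕ` (values below `Q` are irrelevant junk values). -/
structure FFun where
  Q : ℕ
  toFun : ℕ → ℝ
  nonneg : ∀ n, Q ≤ n → 0 ≤ toFun n
  mono : ∀ m n, Q ≤ m → m ≤ n → toFun m ≤ toFun n

/-- `h ⪯ f` : there are positive integers `K, M, N`, with `[N,∞)` contained in the domains of
`h` and `f`, such that `h(n) ≤ K·f(M·n)` for all `n ≥ N`. -/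
def FFun.Preceq (h f : FFun) : Prop :=
  ∃ K M N : ℕ, 0 < K ∧ 0 < M ∧ 0 < N ∧ h.Q ≤ N ∧ f.Q ≤ N ∧
    ∀ n, N ≤ n → h.toFun n ≤ K * f.toFun (M * n)

/-- `h ≍ f` iff `h ⪯ f` and `f ⪯ h`. -/
def FFun.Equiv (h f : FFun) : Prop := h.Preceq f ∧ f.Preceq h

/-- `h ≺ f` iff `h ⪯ f` and not `h ≍ f`. -/
def FFun.Prec (h f : FFun) : Prop := h.Preceq f ∧ ¬ h.Equiv f

/-- `G ∈ ℬ_f` with respect to the generating set `A`: there is a Cayley automatic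
representation `ψ : L → G` such that the function
`h(n) = max{d_A(π(w), ψ(w)) : w ∈ L, |w| ≤ n}` satisfies `h ⪯ f`
(stated equivalently: for some positive `K, M, N` with `N ≥ Q_f`, every `w ∈ L` with `|w| ≤ n`
and `n ≥ N` satisfies `d_A(π(w), ψ(w)) ≤ K·f(M·n)`). -/
def InB (A : Set G) (f : FFun) : Prop :=
  ∃ (L : Language (Alph A)) (ψ : List (Alph A) → G),
    IsCayleyAutomaticRep A L ψ ∧
    ∃ K M N : ℕ, 0 < K ∧ 0 < M ∧ 0 < N ∧ f.Q ≤ N ∧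
      ∀ n, N ≤ n → ∀ w ∈ L, w.length ≤ n →
        (cayleyDist A (eval A w) (ψ w) : ℝ) ≤ K * f.toFun (M * n)

/-- The identity function `𝔦(n) = n` as an element of `𝔉`. -/
def identF : FFun where
  Q := 1
  toFun n := n
  nonneg n _ := by positivity
  mono m n _ h := by simpa using (Nat.cast_le (α := ℝ)).mpr h

/-- The exponential function `𝔢(n) = exp n` as an element of `𝔉`. -/
noncomputable def expF : FFun where
  Q := 1
  toFun n := Real.exp n
  nonneg n _ := (Real.exp_pos n).le
  mono m n _ h := Real.exp_le_exp.mpr (by exact_mod_cast h)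

end CAG
namespace CAG

/-- The Heisenberg group `ℋ₃(ℤ)` of `3×3` upper unitriangular integer matrices, an element
being identified with the triple `(x, y, z)` of its upper-right entries, with multiplication
`(x,y,z)·(x',y',z') = (x+x', y+y', z+z'+x·y')`. -/
@[ext] structure Heis where
  x : ℤ
  y : ℤ
  z : ℤ

instance : Mul Heis := ⟨fun g h => ⟨g.x + h.x, g.y + h.y, g.z + h.z + g.x * h.y⟩⟩
instance : One Heis := ⟨⟨0, 0, 0⟩⟩
instance : Inv Heis := ⟨fun g => ⟨-g.x, -g.y, -g.z + g.x * g.y⟩⟩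

lemma Heis.mul_def (g h : Heis) :
    g * h = ⟨g.x + h.x, g.y + h.y, g.z + h.z + g.x * h.y⟩ := rfl
lemma Heis.one_def : (1 : Heis) = ⟨0, 0, 0⟩ := rfl
lemma Heis.inv_def (g : Heis) : g⁻¹ = ⟨-g.x, -g.y, -g.z + g.x * g.y⟩ := rfl

instance : Group Heis where
  mul_assoc a b c := by
    simp only [Heis.mul_def]
    ext <;> dsimp <;> ring
  one_mul a := by simp only [Heis.mul_def, Heis.one_def]; ext <;> dsimp <;> ring
  mul_one a := by simp only [Heis.mul_def, Heis.one_def]; ext <;> dsimp <;> ring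
  inv_mul_cancel a := by
    simp only [Heis.mul_def, Heis.inv_def, Heis.one_def]
    ext <;> dsimp <;> ring

/-- The generator `s = (1,0,0)` of `ℋ₃(ℤ)`. -/
def Heis.s : Heis := ⟨1, 0, 0⟩
/-- The generator `p = (0,1,0)` of `ℋ₃(ℤ)`. -/
def Heis.p : Heis := ⟨0, 1, 0⟩
/-- The generator `q = (0,0,1)` of `ℋ₃(ℤ)`. -/
def Heis.q : Heis := ⟨0, 0, 1⟩

end CAG

open CAG in
/-- The cube root function `n ↦ n^(1/3)` as an element of `𝔉`. -/
noncomputable def cbrtF : FFun where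
  Q := 1
  toFun n := (n : ℝ) ^ ((1 : ℝ) / 3)
  nonneg n _ := Real.rpow_nonneg (Nat.cast_nonneg n) _
  mono m n _ h :=
    Real.rpow_le_rpow (Nat.cast_nonneg m) (by exact_mod_cast h) (by norm_num)

/-!
The group law `(g, r) (h, t) = (g h, r + t + c g h)` with `c g h = 2 x_g z_h + x_g² y_h` defines a
central extension of `ℋ₃(ℤ)` by `ℤ` that is nilpotent of class three. Lifting a word letter by
letter to this extension and reading off the central coordinate gives a cost which, on the pair of
words `sⁿ p²ⁿ sⁿ` and `pⁿ s²ⁿ pⁿ` with equal values, takes values differing by `2 n³`.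

Suppose that the values `π w` and `ψ w` are at distance at most `H` for all `w ∈ L` of length
`O(n)`. As a regular language has only finitely many left quotients, the prefixes of equal length
of the representatives of two adjacent vertices can be completed by `O(1)` letters to
representatives of adjacent vertices, so they evaluate to elements at distance `O(1 + H)`. A loop
of length `O(n)` is therefore filled by `O(n²)` quadrilaterals with sides of length `O(1 + H)`. The
cocycle is cubic, so each of them contributes `O((1 + H)³)` to the cost, whence
`n³ = O(n² (1 + H)³)` and `∛n = O(1 + H)`.
-/

namespace CAG

section RegularRelation

variable {α : Type*}

/-- All words with a given nonempty left quotient share one shortest continuation, and a regular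
language has only finitely many left quotients. -/
lemma exists_short_continuation {L : Language α} (hL : L.IsRegular) :
    ∃ C : ℕ, ∀ x y : List α, x ++ y ∈ L → ∃ z : List α, z.length ≤ C ∧ x ++ z ∈ L := by
  obtain ⟨C, hC⟩ :=
    (hL.finite_range_leftQuotient.image fun Q => sInf (List.length '' Q)).bddAbove
  refine ⟨C, fun x y hxy => ?_⟩
  have hne : (List.length '' L.leftQuotient x).Nonempty := ⟨_, y, hxy, rfl⟩
  obtain ⟨z, hz, hzlen⟩ := Nat.sInf_mem hne
  exact ⟨z, hzlen ▸ hC ⟨_, ⟨x, rfl⟩, rfl⟩, hz⟩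

lemma length_conv (u v : List α) : (conv u v).length = max u.length v.length := by
  induction u, v using conv.induct <;> simp_all [conv]

lemma take_conv (u v : List α) (t : ℕ) : (conv u v).take t = conv (u.take t) (v.take t) := by
  induction u, v using conv.induct generalizing t <;> cases t <;> simp_all [conv]

lemma filterMap_fst_conv (u v : List α) : (conv u v).filterMap Prod.fst = u := by
  induction u, v using conv.induct <;> simp_all only [conv, List.filterMap_nil, List.filterMap_cons]

lemma filterMap_snd_conv (u v : List α) : (conv u v).filterMap Prod.snd = v := by
  induction u, v using conv.induct <;> simp_all only [conv, List.filterMap_nil, List.filterMap_cons]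

lemma conv_inj {u v u' v' : List α} : conv u v = conv u' v' ↔ u = u' ∧ v = v' := by
  refine ⟨fun h => ⟨?_, ?_⟩, fun ⟨hu, hv⟩ => hu ▸ hv ▸ rfl⟩
  · rw [← filterMap_fst_conv u v, h, filterMap_fst_conv]
  · rw [← filterMap_snd_conv u v, h, filterMap_snd_conv]

lemma IsRegularRel.exists_short_continuation {R : Set (List α × List α)} (hR : IsRegularRel R) :
    ∃ C : ℕ, ∀ u v, (u, v) ∈ R → ∀ t, ∃ u' v', (u', v') ∈ R ∧
      u'.take t = u.take t ∧ v'.take t = v.take t ∧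
      u'.length ≤ t + C ∧ v'.length ≤ t + C := by
  obtain ⟨C, hC⟩ := CAG.exists_short_continuation hR
  refine ⟨C, fun u v huv t => ?_⟩
  obtain ht | ht := le_total (conv u v).length t
  · rw [length_conv] at ht
    exact ⟨u, v, huv, rfl, rfl, by omega, by omega⟩
  obtain ⟨z, hz, ⟨u', v'⟩, huv', hconv⟩ := hC ((conv u v).take t) ((conv u v).drop t)
    ⟨(u, v), huv, List.take_append_drop t _⟩
  have hlen : ((conv u v).take t).length = t := List.length_take_of_le ht
  have htake : (conv u' v').take t = (conv u v).take t := by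
    rw [← hconv, List.take_left' hlen]
  rw [take_conv, take_conv, conv_inj] at htake
  have hbound : max u'.length v'.length ≤ t + C := by
    rw [← length_conv, ← hconv, List.length_append, hlen]
    omega
  exact ⟨u', v', huv', htake.1, htake.2, by omega, by omega⟩

end RegularRelation

section WordMetric

variable {G : Type*} [Group G] {A : Set G}

@[simp] lemma eval_nil : eval A [] = 1 := rfl

@[simp] lemma eval_cons (a : Alph A) (w : List (Alph A)) : eval A (a :: w) = a.val * eval A w :=
  List.prod_cons

@[simp] lemma eval_append (u v : List (Alph A)) : eval A (u ++ v) = eval A u * eval A v := by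
  induction u with
  | nil => simp
  | cons a u ih => simp [ih, mul_assoc]

@[simp] lemma eval_flatten_replicate (n : ℕ) (w : List (Alph A)) :
    eval A (List.replicate n w).flatten = eval A w ^ n := by
  induction n with
  | zero => simp
  | succ n ih => simp [List.replicate_succ, ih, pow_succ']

lemma exists_eval_eq_inv (w : List (Alph A)) :
    ∃ w' : List (Alph A), eval A w' = (eval A w)⁻¹ ∧ w'.length = w.length := by
  induction w with
  | nil => exact ⟨[], by simp⟩
  | cons a w ih =>
    obtain ⟨w', hw', hlen⟩ := ih
    obtain ⟨b, hb⟩ : ∃ b : Alph A, b.val = a.val⁻¹ :=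
      ⟨⟨a.val⁻¹, by simpa [or_comm] using a.2⟩, rfl⟩
    exact ⟨w' ++ [b], by simp [hw', hb], by simp [hlen]⟩

lemma eval_surjective (hA : Subgroup.closure A = ⊤) : Function.Surjective (eval A) := by
  intro g
  have hg : g ∈ Submonoid.closure (A ∪ A⁻¹) := by
    rw [← Subgroup.closure_toSubmonoid, hA]
    exact Subgroup.mem_top g
  obtain ⟨l, hl, rfl⟩ := Submonoid.exists_list_of_mem_closure hg
  lift l to List {x : G // x ∈ A ∪ A⁻¹} using hl
  exact ⟨l, rfl⟩

lemma wordLength_eval_le (w : List (Alph A)) : wordLength A (eval A w) ≤ w.length :=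
  Nat.sInf_le ⟨w, rfl, rfl⟩

lemma exists_eval_eq_length_eq (hA : Subgroup.closure A = ⊤) (g : G) :
    ∃ w : List (Alph A), eval A w = g ∧ w.length = wordLength A g := by
  obtain ⟨w, hw⟩ := eval_surjective hA g
  exact Nat.sInf_mem (s := {n | ∃ w : List (Alph A), eval A w = g ∧ w.length = n}) ⟨_, w, hw, rfl⟩

lemma wordLength_mul_le (hA : Subgroup.closure A = ⊤) (g h : G) :
    wordLength A (g * h) ≤ wordLength A g + wordLength A h := by
  obtain ⟨u, rfl, hu⟩ := exists_eval_eq_length_eq hA g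
  obtain ⟨v, rfl, hv⟩ := exists_eval_eq_length_eq hA h
  rw [← hu, ← hv, ← eval_append, ← List.length_append]
  exact wordLength_eval_le _

lemma wordLength_inv_le (hA : Subgroup.closure A = ⊤) (g : G) :
    wordLength A g⁻¹ ≤ wordLength A g := by
  obtain ⟨w, rfl, hw⟩ := exists_eval_eq_length_eq hA g
  obtain ⟨w', hw', hlen⟩ := exists_eval_eq_inv w
  rw [← hw', ← hw, ← hlen]
  exact wordLength_eval_le _

lemma cayleyDist_triangle (hA : Subgroup.closure A = ⊤) (g h k : G) :
    cayleyDist A g k ≤ cayleyDist A g h + cayleyDist A h k := by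
  simpa [cayleyDist, mul_assoc] using wordLength_mul_le hA (g⁻¹ * h) (h⁻¹ * k)

lemma cayleyDist_comm (hA : Subgroup.closure A = ⊤) (g h : G) :
    cayleyDist A g h = cayleyDist A h g := by
  have key (g h : G) : cayleyDist A g h ≤ cayleyDist A h g := by
    simpa [cayleyDist] using wordLength_inv_le hA (h⁻¹ * g)
  exact (key g h).antisymm (key h g)

lemma cayleyDist_mul_eval_le (g : G) (w : List (Alph A)) :
    cayleyDist A g (g * eval A w) ≤ w.length := by
  simpa [cayleyDist] using wordLength_eval_le w

lemma cayleyDist_mul_letter_le (g : G) (a : Alph A) : cayleyDist A g (g * a.val) ≤ 1 := by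
  simpa using cayleyDist_mul_eval_le g [a]

lemma cayleyDist_eval_take_le (w : List (Alph A)) (t : ℕ) :
    cayleyDist A (eval A (w.take t)) (eval A w) ≤ w.length - t := by
  have h := cayleyDist_mul_eval_le (eval A (w.take t)) (w.drop t)
  rwa [← eval_append, List.take_append_drop, List.length_drop] at h

lemma cayleyDist_eval_take_succ_le (w : List (Alph A)) (t : ℕ) :
    cayleyDist A (eval A (w.take t)) (eval A (w.take (t + 1))) ≤ 1 := by
  rw [List.take_add, eval_append]
  exact (cayleyDist_mul_eval_le _ _).trans (List.length_take_le 1 _)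

end WordMetric

section Automatic

variable {G : Type*} [Group G] {A : Set G} {L : Language (Alph A)} {ψ : List (Alph A) → G}

/-- `C` is a continuation bound for `ψ : L → G` if representatives `u`, `v` of adjacent vertices of
the Cayley graph can be changed after any position `t`, so as to end within `C` further letters
and still represent vertices joined by an edge with the same label. -/
def IsContinuationBound (L : Language (Alph A)) (ψ : List (Alph A) → G) (C : ℕ) : Prop :=
  ∀ a : Alph A, ∀ u ∈ L, ∀ v ∈ L, ψ v = ψ u * a.val → ∀ t, ∃ u' ∈ L, ∃ v' ∈ L,
    ψ v' = ψ u' * a.val ∧ u'.take t = u.take t ∧ v'.take t = v.take t ∧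
    u'.length ≤ t + C ∧ v'.length ≤ t + C

lemma IsCayleyAutomaticRep.exists_isContinuationBound (hfin : A.Finite)
    (hψ : IsCayleyAutomaticRep A L ψ) : ∃ C, IsContinuationBound L ψ C := by
  choose! C hC using fun a ha => (hψ.2.2 a ha).exists_short_continuation
  obtain ⟨D, hD⟩ := (hfin.image C).bddAbove
  refine ⟨D, fun a u hu v hv huv t => ?_⟩
  obtain ha | ha := a.2
  · have hCD : C a.val ≤ D := hD ⟨_, ha, rfl⟩
    obtain ⟨u', v', ⟨hu', hv', h⟩, htu, htv, hlu, hlv⟩ := hC a.val ha u v ⟨hu, hv, huv⟩ t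
    exact ⟨u', hu', v', hv', h, htu, htv, by omega, by omega⟩
  · have hCD : C a.val⁻¹ ≤ D := hD ⟨_, ha, rfl⟩
    obtain ⟨v', u', ⟨hv', hu', h⟩, htv, htu, hlv, hlu⟩ :=
      hC a.val⁻¹ ha v u ⟨hv, hu, eq_mul_inv_of_mul_eq huv.symm⟩ t
    exact ⟨u', hu', v', hv', (eq_mul_inv_iff_mul_eq.1 h).symm, htu, htv, by omega, by omega⟩

variable {C : ℕ} {u v : List (Alph A)} {a : Alph A}

lemma IsContinuationBound.length_le (hC : IsContinuationBound L ψ C) (hinj : Set.InjOn ψ L)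
    (hu : u ∈ L) (hv : v ∈ L) (huv : ψ v = ψ u * a.val) : v.length ≤ u.length + (C + 1) := by
  obtain ⟨u', -, v', hv', h, htu, -, -, hlv⟩ := hC a u hu v hv huv (u.length + 1)
  have hu' : u' = u := by
    rw [List.take_of_length_le (l := u) (Nat.le_succ _)] at htu
    have hlen : min (u.length + 1) u'.length = u.length := by
      rw [← List.length_take, htu]
    rwa [List.take_of_length_le (by omega)] at htu
  have hvv' : v' = v := hinj hv' hv (by rw [h, hu', huv])
  rw [← hvv']
  omega

lemma IsContinuationBound.cayleyDist_eval_take_le (hC : IsContinuationBound L ψ C)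
    (hA : Subgroup.closure A = ⊤) {H T t : ℕ}
    (hH : ∀ w ∈ L, w.length ≤ T + C → cayleyDist A (eval A w) (ψ w) ≤ H)
    (hu : u ∈ L) (hv : v ∈ L) (huv : ψ v = ψ u * a.val) (ht : t ≤ T) :
    cayleyDist A (eval A (u.take t)) (eval A (v.take t)) ≤ 2 * C + 2 * H + 1 := by
  obtain ⟨u', hu', v', hv', h, htu, htv, hlu, hlv⟩ := hC a u hu v hv huv t
  rw [← htu, ← htv]
  have hstep : cayleyDist A (ψ u') (ψ v') ≤ 1 := h ▸ cayleyDist_mul_letter_le (ψ u') a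
  have hprefix (w : List (Alph A)) (hw : w ∈ L) (hlw : w.length ≤ t + C) :
      cayleyDist A (eval A (w.take t)) (ψ w) ≤ C + H := by
    have h₁ := CAG.cayleyDist_eval_take_le w t
    have h₂ := hH w hw (by omega)
    have h₃ := cayleyDist_triangle hA (eval A (w.take t)) (eval A w) (ψ w)
    omega
  have hu'' := hprefix u' hu' hlu
  have hv'' := hprefix v' hv' hlv
  rw [cayleyDist_comm hA] at hv''
  have h₁ := cayleyDist_triangle hA (eval A (u'.take t)) (ψ u') (eval A (v'.take t))
  have h₂ := cayleyDist_triangle hA (ψ u') (ψ v') (eval A (v'.take t))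
  omega

end Automatic

section Cocycle

variable {G : Type*} [Group G] {A : Set G} {R : Type*}

/-- Minus the central coordinate of `(g, 0)⁻¹ (h, 0)` in the central extension defined by `c`: the
cost of moving from `g` to `h` in one step. -/
def jump (c : G → G → R) (g h : G) : R := c g (g⁻¹ * h)

lemma jump_mul (c : G → G → R) (g h : G) : jump c g (g * h) = c g h := by
  rw [jump, inv_mul_cancel_left]

variable [CommRing R]

/-- A normalized 2-cocycle of `G` with values in `R`, where `G` acts trivially. It defines the
central extension of `G` by `R` with multiplication `(g, r) (h, s) = (g h, r + s + c g h)`. -/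
structure IsNormalizedCocycle (c : G → G → R) : Prop where
  apply_one : ∀ g, c g 1 = 0
  cocycle : ∀ g h k, c g h + c (g * h) k = c h k + c g (h * k)

/-- The central coordinate of the product of the lifts `(a, 0)` of the letters `a` of a word, in
the central extension defined by `c`. -/
def wordCost (c : G → G → R) : List (Alph A) → R
  | [] => 0
  | a :: w => c a.val (eval A w) + wordCost c w

/-- The cost of following the path of the word `w` and then jumping from its end to `g`. -/
def potential (c : G → G → R) (w : List (Alph A)) (g : G) : R :=
  wordCost c w + jump c (eval A w) g

variable {c : G → G → R}

namespace IsNormalizedCocycle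

lemma one_apply (hc : IsNormalizedCocycle c) (h : G) : c 1 h = 0 := by
  have h₁ := hc.cocycle 1 1 h
  rw [hc.apply_one, mul_one, zero_add] at h₁
  exact left_eq_add.1 (h₁.trans (by rw [one_mul]))

lemma wordCost_append (hc : IsNormalizedCocycle c) (u v : List (Alph A)) :
    wordCost c (u ++ v) = wordCost c u + wordCost c v + c (eval A u) (eval A v) := by
  induction u with
  | nil => simp [wordCost, hc.one_apply]
  | cons a u ih =>
    have h := hc.cocycle a.val (eval A u) (eval A v)
    simp only [List.cons_append, wordCost, ih, eval_append, eval_cons]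
    linear_combination -h

lemma wordCost_append_singleton (hc : IsNormalizedCocycle c) (w : List (Alph A)) (a : Alph A) :
    wordCost c (w ++ [a]) = wordCost c w + c (eval A w) a.val := by
  simp [hc.wordCost_append, wordCost, hc.apply_one]

lemma wordCost_flatten_replicate (hc : IsNormalizedCocycle c) {w : List (Alph A)}
    (hw : ∀ i : ℕ, c (eval A w) (eval A w ^ i) = 0) (n : ℕ) :
    wordCost c (List.replicate n w).flatten = n * wordCost c w := by
  induction n with
  | zero => simp [wordCost]
  | succ n ih =>
    simp only [List.replicate_succ, List.flatten_cons, hc.wordCost_append, ih,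
      eval_flatten_replicate, hw]
    push_cast
    ring

lemma wordCost_take_succ (hc : IsNormalizedCocycle c) (w : List (Alph A)) (t : ℕ) :
    wordCost c (w.take (t + 1)) =
      wordCost c (w.take t) + jump c (eval A (w.take t)) (eval A (w.take (t + 1))) := by
  rw [List.take_add, eval_append, jump_mul, hc.wordCost_append]
  have hletter : wordCost c ((w.drop t).take 1) = 0 := by
    cases w.drop t <;> simp [wordCost, hc.apply_one]
  rw [hletter, add_zero]

lemma jump_self (hc : IsNormalizedCocycle c) (g : G) : jump c g g = 0 := by
  rw [jump, inv_mul_cancel, hc.apply_one]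

lemma jump_add_jump (hc : IsNormalizedCocycle c) (g h k : G) :
    jump c g h + jump c h k = jump c g k + c (g⁻¹ * h) (h⁻¹ * k) := by
  have h₁ := hc.cocycle g (g⁻¹ * h) (h⁻¹ * k)
  rw [mul_inv_cancel_left, mul_assoc, mul_inv_cancel_left] at h₁
  rw [jump, jump, jump, h₁, add_comm]

end IsNormalizedCocycle

variable [LinearOrder R]

/-- `B` bounds `|c|` on pairs of elements of word length at most `k`. -/
def IsBallBound (A : Set G) (c : G → G → R) (k : ℕ) (B : R) : Prop :=
  ∀ g h, wordLength A g ≤ k → wordLength A h ≤ k → |c g h| ≤ B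

variable {k T : ℕ} {B : R} {u v : List (Alph A)}

lemma IsBallBound.anti {l : ℕ} (hB : IsBallBound A c l B) (hkl : k ≤ l) : IsBallBound A c k B :=
  fun g h hg hh => hB g h (hg.trans hkl) (hh.trans hkl)

variable [IsStrictOrderedRing R]

lemma IsBallBound.nonneg (hB : IsBallBound A c k B) : 0 ≤ B := by
  have h1 : wordLength A (1 : G) ≤ k := (wordLength_eval_le []).trans k.zero_le
  exact (abs_nonneg _).trans (hB 1 1 h1 h1)

namespace IsNormalizedCocycle

lemma abs_jump_quadrilateral_le (hc : IsNormalizedCocycle c) (hB : IsBallBound A c k B)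
    {g₁ g₂ h₁ h₂ : G} (hg : cayleyDist A g₁ g₂ ≤ k) (h₂' : cayleyDist A g₂ h₂ ≤ k)
    (h₁' : cayleyDist A g₁ h₁ ≤ k) (hh : cayleyDist A h₁ h₂ ≤ k) :
    |jump c g₁ g₂ + jump c g₂ h₂ - (jump c g₁ h₁ + jump c h₁ h₂)| ≤ 2 * B := by
  rw [hc.jump_add_jump, hc.jump_add_jump, add_sub_add_left_eq_sub]
  have := abs_sub (c (g₁⁻¹ * g₂) (g₂⁻¹ * h₂)) (c (g₁⁻¹ * h₁) (h₁⁻¹ * h₂))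
  linarith [hB _ _ hg h₂', hB _ _ h₁' hh]

/-- The strip between two fellow-travelling paths is cut into quadrilaterals. -/
lemma abs_wordCost_take_sub_le (hc : IsNormalizedCocycle c) (hB : IsBallBound A c k B)
    (hk : 1 ≤ k) (h : ∀ t ≤ T, cayleyDist A (eval A (u.take t)) (eval A (v.take t)) ≤ k) :
    |wordCost c (u.take T) + jump c (eval A (u.take T)) (eval A (v.take T)) -
      wordCost c (v.take T)| ≤ T * (2 * B) := by
  induction T with
  | zero => simp [wordCost, hc.jump_self]
  | succ T ih =>
    have hih := ih fun t ht => h t (by omega)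
    have hquad := hc.abs_jump_quadrilateral_le hB (h T (by omega))
      ((cayleyDist_eval_take_succ_le v T).trans hk) ((cayleyDist_eval_take_succ_le u T).trans hk)
      (h (T + 1) le_rfl)
    rw [hc.wordCost_take_succ u, hc.wordCost_take_succ v]
    rw [abs_le] at *
    push_cast
    constructor <;> linarith

lemma abs_potential_sub_le (hc : IsNormalizedCocycle c) (hB : IsBallBound A c k B) (hk : 1 ≤ k)
    (h : ∀ t ≤ T, cayleyDist A (eval A (u.take t)) (eval A (v.take t)) ≤ k)
    (hu : u.length ≤ T) (hv : v.length ≤ T) {g : G} {a : Alph A}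
    (hug : cayleyDist A (eval A u) g ≤ k) (hvg : cayleyDist A (eval A v) (g * a.val) ≤ k) :
    |potential c v (g * a.val) - potential c u g - c g a.val| ≤ (T + 1) * (2 * B) := by
  have hstrip := hc.abs_wordCost_take_sub_le hB hk h
  have huv := h T le_rfl
  rw [List.take_of_length_le hu, List.take_of_length_le hv] at hstrip huv
  have hquad := hc.abs_jump_quadrilateral_le hB huv hvg hug
    ((cayleyDist_mul_letter_le g a).trans hk)
  rw [jump_mul] at hquad
  unfold potential
  rw [abs_le] at *
  constructor <;> linarith

lemma abs_sub_wordCost_le (hc : IsNormalizedCocycle c) {F : G → R} {len : G → ℕ} {m : ℕ} {β : R}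
    (hlen : ∀ g (a : Alph A), len (g * a.val) ≤ len g + m)
    (hF : ∀ g (a : Alph A), len g ≤ T → len (g * a.val) ≤ T →
      |F (g * a.val) - F g - c g a.val| ≤ β)
    (w : List (Alph A)) (hw : len 1 + m * w.length ≤ T) :
    |F (eval A w) - F 1 - wordCost c w| ≤ w.length * β := by
  have hlen_eval (w : List (Alph A)) : len (eval A w) ≤ len 1 + m * w.length := by
    induction w using List.reverseRecOn with
    | nil => simp
    | append_singleton w a ih =>
      have := hlen (eval A w) a
      simp only [eval_append, eval_cons, eval_nil, mul_one, List.length_append,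
        List.length_singleton, mul_add]
      omega
  induction w using List.reverseRecOn with
  | nil => simp [wordCost]
  | append_singleton w a ih =>
    have hle := hlen_eval (w ++ [a])
    have hstep := hF (eval A w) a
    simp only [List.length_append, List.length_singleton, mul_add, mul_one, eval_append, eval_cons,
      eval_nil] at hw hle ⊢
    specialize ih (by omega)
    specialize hstep ((hlen_eval w).trans (by omega)) (by omega)
    rw [hc.wordCost_append_singleton]
    rw [abs_le] at *
    push_cast
    constructor <;> linarith

end IsNormalizedCocycle

section Representation

variable {L : Language (Alph A)} {ψ : List (Alph A) → G}

lemma IsContinuationBound.abs_potential_sub_wordCost_le {C H : ℕ} (hC : IsContinuationBound L ψ C)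
    (hinj : Set.InjOn ψ L) (hA : Subgroup.closure A = ⊤) {rep : G → List (Alph A)}
    (hrep : ∀ g, rep g ∈ L) (hψrep : ∀ g, ψ (rep g) = g)
    (hH : ∀ w ∈ L, w.length ≤ T + C → cayleyDist A (eval A w) (ψ w) ≤ H)
    (hc : IsNormalizedCocycle c) (hB : IsBallBound A c (2 * C + 2 * H + 1) B)
    (w : List (Alph A)) (hw : (rep 1).length + (C + 1) * w.length ≤ T) :
    |potential c (rep (eval A w)) (eval A w) - potential c (rep 1) 1 - wordCost c w| ≤
      w.length * ((T + 1) * (2 * B)) := by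
  have hadj (g : G) (a : Alph A) : ψ (rep (g * a.val)) = ψ (rep g) * a.val := by
    rw [hψrep, hψrep]
  have hend (g : G) (hg : (rep g).length ≤ T) :
      cayleyDist A (eval A (rep g)) g ≤ 2 * C + 2 * H + 1 := by
    have := hH (rep g) (hrep g) (by omega)
    rw [hψrep] at this
    omega
  exact hc.abs_sub_wordCost_le (F := fun g => potential c (rep g) g)
    (len := fun g => (rep g).length)
    (fun g a => hC.length_le hinj (hrep g) (hrep _) (hadj g a))
    (fun g a hg hga => hc.abs_potential_sub_le hB (by omega)
      (fun t ht => hC.cayleyDist_eval_take_le hA hH (hrep g) (hrep _) (hadj g a) ht)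
      hg hga (hend g hg) (hend _ hga))
    w hw

theorem IsCayleyAutomaticRep.exists_abs_wordCost_sub_le (hψ : IsCayleyAutomaticRep A L ψ)
    (hfin : A.Finite) (hA : Subgroup.closure A = ⊤) :
    ∃ D : ℕ, 0 < D ∧ ∀ {c : G → G → R} {B : R} {n H : ℕ}, IsNormalizedCocycle c → 0 < n →
      (∀ w ∈ L, w.length ≤ D * n → cayleyDist A (eval A w) (ψ w) ≤ H) →
      IsBallBound A c (D * (1 + H)) B →
      ∀ u v : List (Alph A), eval A u = eval A v → u.length ≤ n → v.length ≤ n →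
        |wordCost c u - wordCost c v| ≤ 4 * D * n ^ 2 * B := by
  obtain ⟨C, hC⟩ := hψ.exists_isContinuationBound hfin
  choose rep hrep hψrep using fun g => hψ.2.1.surjOn (Set.mem_univ g)
  refine ⟨(rep 1).length + 2 * C + 2, by omega, fun {c B n H} hc hn hH hB u v huv hu hv => ?_⟩
  set D := (rep 1).length + 2 * C + 2 with hD
  set T := (rep 1).length + (C + 1) * n with hT
  have hTD : T + C + 1 ≤ D * n := by nlinarith
  have hkD : 2 * C + 2 * H + 1 ≤ D * (1 + H) := by nlinarith
  have hB0 : 0 ≤ B := hB.nonneg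
  have hwalk (w : List (Alph A)) (hw : w.length ≤ n) :
      |potential c (rep (eval A w)) (eval A w) - potential c (rep 1) 1 - wordCost c w| ≤
        n * ((D * n) * (2 * B)) :=
    calc _ ≤ w.length * ((T + 1) * (2 * B)) :=
          hC.abs_potential_sub_wordCost_le hψ.2.1.injOn hA hrep hψrep
            (fun w hw hl => hH w hw (by omega)) hc (hB.anti hkD) w (by rw [hT]; gcongr)
      _ ≤ n * ((D * n) * (2 * B)) := by
          have hTD' : (T : R) + 1 ≤ D * n := by exact_mod_cast (by omega : T + 1 ≤ D * n)
          gcongr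
  have hu' := hwalk u hu
  have hv' := hwalk v hv
  rw [huv] at hu'
  rw [abs_le] at *
  constructor <;> linarith

end Representation

end Cocycle

namespace Heis

lemma s_zpow (n : ℤ) : s ^ n = ⟨n, 0, 0⟩ := by
  induction n with
  | zero => rfl
  | succ n ih =>
    rw [zpow_add_one, ih]
    ext <;> dsimp only [mul_def, s] <;> ring
  | pred n ih =>
    rw [zpow_sub_one, ih]
    ext <;> dsimp only [mul_def, inv_def, s] <;> ring

lemma p_zpow (n : ℤ) : p ^ n = ⟨0, n, 0⟩ := by
  induction n with
  | zero => rfl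
  | succ n ih =>
    rw [zpow_add_one, ih]
    ext <;> dsimp only [mul_def, p] <;> ring
  | pred n ih =>
    rw [zpow_sub_one, ih]
    ext <;> dsimp only [mul_def, inv_def, p] <;> ring

lemma q_zpow (n : ℤ) : q ^ n = ⟨0, 0, n⟩ := by
  induction n with
  | zero => rfl
  | succ n ih =>
    rw [zpow_add_one, ih]
    ext <;> dsimp only [mul_def, q] <;> ring
  | pred n ih =>
    rw [zpow_sub_one, ih]
    ext <;> dsimp only [mul_def, inv_def, q] <;> ring

lemma s_pow (n : ℕ) : s ^ n = ⟨n, 0, 0⟩ := by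
  rw [← zpow_natCast, s_zpow]

lemma p_pow (n : ℕ) : p ^ n = ⟨0, n, 0⟩ := by
  rw [← zpow_natCast, p_zpow]

lemma closure_s_p_q : Subgroup.closure {s, p, q} = ⊤ := by
  refine (Subgroup.eq_top_iff' _).2 fun g => ?_
  have hg : g = q ^ g.z * p ^ g.y * s ^ g.x := by
    simp [s_zpow, p_zpow, q_zpow, mul_def]
  rw [hg]
  refine mul_mem (mul_mem ?_ ?_) ?_ <;> exact zpow_mem (Subgroup.subset_closure (by simp)) _

/-- `g` lies in the box of size `k` for the anisotropic scaling of `ℋ₃`, in which the central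
coordinate scales quadratically. -/
def InBox (k : ℕ) (g : Heis) : Prop :=
  |g.x| ≤ k ∧ |g.y| ≤ k ∧ |g.z| ≤ k ^ 2

lemma InBox.mono {k l : ℕ} {g : Heis} (hg : InBox k g) (hkl : k ≤ l) : InBox l g := by
  obtain ⟨hx, hy, hz⟩ := hg
  have : (k : ℤ) ≤ l := by exact_mod_cast hkl
  exact ⟨hx.trans this, hy.trans this, hz.trans (by gcongr)⟩

lemma InBox.mul {k l : ℕ} {g h : Heis} (hg : InBox k g) (hh : InBox l h) :
    InBox (k + l) (g * h) := by
  obtain ⟨hgx, hgy, hgz⟩ := hg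
  obtain ⟨hhx, hhy, hhz⟩ := hh
  rw [mul_def]
  refine ⟨?_, ?_, ?_⟩ <;> push_cast
  · exact (abs_add_le _ _).trans (add_le_add hgx hhx)
  · exact (abs_add_le _ _).trans (add_le_add hgy hhy)
  · have hxy : |g.x * h.y| ≤ k * l := by
      rw [abs_mul]
      gcongr
    nlinarith [abs_add_three g.z h.z (g.x * h.y)]

lemma exists_inBox (g : Heis) : ∃ k, InBox k g := by
  refine ⟨g.x.natAbs + g.y.natAbs + g.z.natAbs, ?_, ?_, ?_⟩ <;> push_cast
  · linarith [abs_nonneg g.y, abs_nonneg g.z]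
  · linarith [abs_nonneg g.x, abs_nonneg g.z]
  · have hz : |g.z| ≤ |g.z| ^ 2 := by
      rw [Int.abs_eq_natAbs]
      exact_mod_cast Nat.le_self_pow two_ne_zero g.z.natAbs
    refine hz.trans ?_
    gcongr
    linarith [abs_nonneg g.x, abs_nonneg g.y]

lemma InBox.eval {A : Set Heis} {r : ℕ} (hr : ∀ a : Alph A, InBox r a.val) (w : List (Alph A)) :
    InBox (r * w.length) (eval A w) := by
  induction w with
  | nil => simp [InBox, one_def]
  | cons a w ih =>
    rw [eval_cons, List.length_cons, mul_add_one, add_comm]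
    exact (hr a).mul ih

lemma exists_inBox_wordLength {A : Set Heis} (hfin : A.Finite) (hA : Subgroup.closure A = ⊤) :
    ∃ r : ℕ, ∀ g, InBox (r * wordLength A g) g := by
  choose size hsize using exists_inBox
  obtain ⟨r, hr⟩ := ((hfin.union hfin.inv).image size).bddAbove
  refine ⟨r, fun g => ?_⟩
  obtain ⟨w, hw, hlen⟩ := exists_eval_eq_length_eq hA g
  rw [← hlen, ← hw]
  exact InBox.eval (fun a => (hsize a.val).mono (hr ⟨_, a.2, rfl⟩)) w

/-- The cocycle whose central extension of `ℋ₃(ℤ)` is a filiform nilpotent group of class three;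
its cubic growth is that of the Dehn function of `ℋ₃(ℤ)`. -/
def filiformCocycle (g h : Heis) : ℤ := 2 * g.x * h.z + g.x ^ 2 * h.y

lemma isNormalizedCocycle_filiformCocycle : IsNormalizedCocycle filiformCocycle where
  apply_one g := by simp [filiformCocycle, one_def]
  cocycle g h k := by
    simp only [filiformCocycle, mul_def]
    ring

lemma InBox.abs_filiformCocycle_le {k : ℕ} {g h : Heis} (hg : InBox k g) (hh : InBox k h) :
    |filiformCocycle g h| ≤ 3 * k ^ 3 := by
  obtain ⟨hgx, -, -⟩ := hg
  obtain ⟨-, hhy, hhz⟩ := hh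
  calc |filiformCocycle g h|
      ≤ |2 * g.x * h.z| + |g.x ^ 2 * h.y| := abs_add_le _ _
    _ = 2 * |g.x| * |h.z| + |g.x| ^ 2 * |h.y| := by simp [abs_mul]
    _ ≤ 2 * k * k ^ 2 + k ^ 2 * k := by gcongr
    _ = 3 * k ^ 3 := by ring

lemma exists_isBallBound_filiformCocycle {A : Set Heis} (hfin : A.Finite)
    (hA : Subgroup.closure A = ⊤) :
    ∃ r : ℕ, ∀ k, IsBallBound A filiformCocycle k ((r * k) ^ 3) := by
  obtain ⟨r, hr⟩ := exists_inBox_wordLength hfin hA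
  refine ⟨2 * r, fun k g h hg hh => ?_⟩
  have hbox (x : Heis) (hx : wordLength A x ≤ k) : InBox (r * k) x := (hr x).mono (by gcongr)
  have := (hbox g hg).abs_filiformCocycle_le (hbox h hh)
  have : (0 : ℤ) ≤ (r * k) ^ 3 := by positivity
  push_cast at *
  linarith

/-- Both `sⁿ p²ⁿ sⁿ` and `pⁿ s²ⁿ pⁿ` equal `(2n, 2n, 2n²)`, and they use the generators equally
often. -/
lemma exists_eval_eq_and_wordCost_sub_eq {A : Set Heis} (hA : Subgroup.closure A = ⊤) :
    ∃ l : ℕ, 0 < l ∧ ∀ n : ℕ, ∃ u v : List (Alph A), eval A u = eval A v ∧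
      u.length ≤ l * n ∧ v.length ≤ l * n ∧
      wordCost filiformCocycle v - wordCost filiformCocycle u = 2 * n ^ 3 := by
  obtain ⟨S, hS⟩ := eval_surjective hA s
  obtain ⟨P, hP⟩ := eval_surjective hA p
  have hc := isNormalizedCocycle_filiformCocycle
  have hcS := hc.wordCost_flatten_replicate (w := S) fun i => by
    rw [hS, s_pow]; simp [filiformCocycle, s]
  have hcP := hc.wordCost_flatten_replicate (w := P) fun i => by
    rw [hP, p_pow]; simp [filiformCocycle, p]
  refine ⟨2 * S.length + 2 * P.length + 1, by omega, fun n => ?_⟩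
  let pow (w : List (Alph A)) (m : ℕ) := (List.replicate m w).flatten
  have hlen (w : List (Alph A)) (m : ℕ) : (pow w m).length = m * w.length := by simp [pow]
  refine ⟨pow S n ++ pow P (2 * n) ++ pow S n, pow P n ++ pow S (2 * n) ++ pow P n, ?_, ?_, ?_, ?_⟩
  · simp only [pow, eval_append, eval_flatten_replicate, hS, hP, s_pow, p_pow, mul_def]
    ext <;> push_cast <;> ring
  · simp only [List.length_append, hlen]
    linarith
  · simp only [List.length_append, hlen]
    linarith
  · simp only [pow, hc.wordCost_append, hcS, hcP, eval_append, eval_flatten_replicate, hS, hP,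
      s_pow, p_pow, mul_def, filiformCocycle]
    push_cast
    ring

end Heis

theorem IsCayleyAutomaticRep.exists_le_pow_three {A : Set Heis} {L : Language (Alph A)}
    {ψ : List (Alph A) → Heis} (hψ : IsCayleyAutomaticRep A L ψ) (hfin : A.Finite)
    (hA : Subgroup.closure A = ⊤) :
    ∃ E : ℕ, 0 < E ∧ ∀ n H : ℕ,
      (∀ w ∈ L, w.length ≤ E * n → cayleyDist A (eval A w) (ψ w) ≤ H) →
      n ≤ (E * (1 + H)) ^ 3 := by
  obtain ⟨D, hD, hloop⟩ := hψ.exists_abs_wordCost_sub_le (R := ℤ) hfin hA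
  obtain ⟨r, hr⟩ := Heis.exists_isBallBound_filiformCocycle hfin hA
  obtain ⟨l, hl, hwords⟩ := Heis.exists_eval_eq_and_wordCost_sub_eq hA
  refine ⟨2 * D ^ 4 * l ^ 2 * r ^ 3 + D * l, by positivity, fun n H hH => ?_⟩
  set E := 2 * D ^ 4 * l ^ 2 * r ^ 3 + D * l
  obtain rfl | hn := n.eq_zero_or_pos
  · exact Nat.zero_le _
  obtain ⟨u, v, huv, hu, hv, hcost⟩ := hwords n
  have hbound : 2 * (n : ℤ) ^ 3 ≤ 4 * D * (l * n : ℕ) ^ 2 * (r * (D * (1 + H) : ℕ)) ^ 3 := by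
    rw [← hcost]
    refine (le_abs_self _).trans (hloop Heis.isNormalizedCocycle_filiformCocycle (by positivity)
      (fun w hw hlen => hH w hw (hlen.trans ?_)) (hr _) v u huv.symm hv hu)
    rw [← mul_assoc]
    gcongr
    exact Nat.le_add_left _ _
  have hcube : (n : ℤ) ≤ (2 * D ^ 4 * l ^ 2 * r ^ 3) * (1 + H) ^ 3 := by
    refine le_of_mul_le_mul_left ?_ (by positivity : (0 : ℤ) < 2 * n ^ 2)
    push_cast at hbound
    linarith
  calc n ≤ (2 * D ^ 4 * l ^ 2 * r ^ 3) * (1 + H) ^ 3 := by exact_mod_cast hcube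
    _ ≤ E ^ 3 * (1 + H) ^ 3 := by
        gcongr
        exact (Nat.le_add_right _ _).trans (Nat.le_self_pow three_ne_zero E)
    _ = (E * (1 + H)) ^ 3 := (mul_pow _ _ _).symm

lemma cbrtF_preceq_of_le_pow_three {f : FFun} {a b M N : ℕ} (hM : 0 < M)
    (h : ∀ n, N ≤ n → (n : ℝ) ≤ (a + b * f.toFun (M * n)) ^ 3) : cbrtF.Preceq f := by
  refine ⟨2 * b + 1, M, N + (2 * a) ^ 3 + f.Q + 1, by omega, hM, by omega, ?_, by omega,
    fun n hn => ?_⟩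
  · change 1 ≤ _
    omega
  have hf : 0 ≤ f.toFun (M * n) := f.nonneg _ (le_trans (by omega) (Nat.le_mul_of_pos_left n hM))
  have hcbrt (x : ℝ) (hx : 0 ≤ x) : (x ^ 3) ^ ((1 : ℝ) / 3) = x := by
    rw [one_div]
    exact Real.pow_rpow_inv_natCast hx three_ne_zero
  have hlarge : (2 * a : ℝ) ≤ (n : ℝ) ^ ((1 : ℝ) / 3) := by
    rw [← hcbrt (2 * a) (by positivity)]
    gcongr
    exact_mod_cast (by omega : (2 * a) ^ 3 ≤ n)
  have hle : (n : ℝ) ^ ((1 : ℝ) / 3) ≤ a + b * f.toFun (M * n) := by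
    rw [← hcbrt (a + b * f.toFun (M * n)) (by positivity)]
    gcongr
    exact h n (by omega)
  change (n : ℝ) ^ ((1 : ℝ) / 3) ≤ _
  push_cast
  linarith

end CAG

open CAG in
theorem heisenberg_not_mem_classB_of_prec_cbrt_general {A : Set Heis} (hfin : A.Finite)
    (hA : Subgroup.closure A = ⊤) {f : FFun} (hf : ¬ cbrtF.Preceq f) : ¬ InB A f := by
  rintro ⟨L, ψ, hψ, K, M, N, -, hM, -, hQ, hd⟩
  obtain ⟨E, hE, hcube⟩ := hψ.exists_le_pow_three hfin hA
  refine hf (cbrtF_preceq_of_le_pow_three (a := E) (b := E * K) (M := M * E) (N := N)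
    (by positivity) fun n hn => ?_)
  have hnE : N ≤ E * n := hn.trans (Nat.le_mul_of_pos_left n hE)
  set h := K * f.toFun (M * (E * n)) with hh
  have hh0 : 0 ≤ h :=
    mul_nonneg K.cast_nonneg (f.nonneg _ (hQ.trans (hnE.trans (Nat.le_mul_of_pos_left _ hM))))
  have hn3 : n ≤ (E * (1 + ⌊h⌋₊)) ^ 3 :=
    hcube n ⌊h⌋₊ fun w hw hlen => Nat.le_floor (hd (E * n) hnE w hw hlen)
  calc (n : ℝ) ≤ (E * (1 + ⌊h⌋₊)) ^ 3 := by exact_mod_cast hn3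
    _ ≤ (E * (1 + h)) ^ 3 := by gcongr; exact Nat.floor_le hh0
    _ = _ := by rw [hh, ← mul_assoc M]; push_cast; ring

open CAG in
/-- For every `f ∈ 𝔉` with `f ≺ ∛·` (the cube root function), the Heisenberg group `ℋ₃(ℤ)`
does not belong to the class `ℬ_f`. -/
theorem heisenberg_not_mem_classB_of_prec_cbrt (f : FFun) (hf : f.Prec cbrtF) :
    ¬ InB ({Heis.s, Heis.p, Heis.q} : Set Heis) f :=
  heisenberg_not_mem_classB_of_prec_cbrt_general (Set.toFinite _) Heis.closure_s_p_q
    fun h => hf.2 ⟨hf.1, h⟩
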